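/- Fix δ ∈ (0,1) and ε ∈ [0,1). There exists a constant c(δ) > 0 depending only on δ such that: if ε·√(mn) ≤ c(δ), mn/√p ≤ c(δ), and n·log(mn)/k ≤ c(δ), then with probability at least 1 − δ (over the data, the weights, and the noise), every minimizer ṽ of v ↦ ‖η − A_β v‖₁ over ℝ^n satisfies A_β ṽ = β*. -/

import Mathlib

open MeasureTheory ProbabilityTheory Real
open scoped NNReal

noncomputable section

def relu (t : ℝ) : ℝ := max 0 t

def dot {k : ℕ} (x y : Fin k → ℝ) : ℝ := ∑ i, x i * y i

/-- `a`-th non-overlapping patch (block of `k` consecutive coordinates). -/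
def patch (m k : ℕ) (a : Fin m) (v : Fin (m * k) → ℝ) (i : Fin k) : ℝ :=
  v ⟨a.1 * k + i.1, by
    calc a.1 * k + i.1 < a.1 * k + k := Nat.add_lt_add_left i.2 _
      _ = (a.1 + 1) * k := by ring
      _ ≤ m * k := Nat.mul_le_mul_right k a.2⟩

/-- law of a standard Gaussian vector `N(0, I_d)` on `ℝ^d`. -/
def stdGaussianVec (d : ℕ) : Measure (Fin d → ℝ) :=
  Measure.pi fun _ => gaussianReal 0 1

/-- law of a Gaussian vector `N(0, k⁻¹ I_k)` on `ℝ^k`. -/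
def hiddenWeightLaw (k : ℕ) : Measure (Fin k → ℝ) :=
  Measure.pi fun _ => gaussianReal 0 ((k : ℝ≥0))⁻¹

/-- coordinate law `(1−ε)δ₀ + ε Q` of the mixture contamination noise. -/
def mixture (ε : ℝ) (Q : Measure ℝ) : Measure ℝ :=
  ENNReal.ofReal (1 - ε) • Measure.dirac 0 + ENNReal.ofReal ε • Q

/-- entry `(j, s)` of the output-layer design matrix `A_β`. -/
def Abeta (m n p k : ℕ) (x : Fin n → Fin (m * k) → ℝ)
    (W : Fin p → Fin k → ℝ) (j : Fin p) (s : Fin n) : ℝ :=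
  ∑ a : Fin m, relu (dot (W j) (patch m k a (x s)))

/-- `A_β v` for `v ∈ ℝ^n`. -/
def AbetaApp (m n p k : ℕ) (x : Fin n → Fin (m * k) → ℝ)
    (W : Fin p → Fin k → ℝ) (v : Fin n → ℝ) (j : Fin p) : ℝ :=
  ∑ s : Fin n, Abeta m n p k x W j s * v s

/-! ### Gaussian facts -/

lemma gaussian_lin_exp {ι : Type*} [Fintype ι] (σ : ℝ≥0) (b : ι → ℝ) :
    ∫ w : ι → ℝ, Complex.exp (((∑ i, b i * w i : ℝ) : ℂ) * Complex.I)
      ∂(Measure.pi fun _ : ι => gaussianReal 0 σ)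
      = Complex.exp (-((σ * ∑ i, b i ^ 2 : ℝ) : ℂ) / 2) := by
  have h1 : ∀ w : ι → ℝ, Complex.exp (((∑ i, b i * w i : ℝ) : ℂ) * Complex.I)
      = ∏ i, Complex.exp ((b i : ℂ) * (w i : ℂ) * Complex.I) := by
    intro w
    rw [← Complex.exp_sum]
    push_cast
    rw [Finset.sum_mul]
  simp_rw [h1]
  rw [integral_fintype_prod_eq_prod
    (f := fun i (t : ℝ) => Complex.exp ((b i : ℂ) * (t : ℂ) * Complex.I))]
  have h2 : ∀ i, ∫ t : ℝ, Complex.exp ((b i : ℂ) * (t : ℂ) * Complex.I) ∂(gaussianReal 0 σ)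
      = Complex.exp (-(σ * b i ^ 2 : ℝ) / 2) := by
    intro i
    rw [← charFun_apply_real, charFun_gaussianReal]
    congr 1
    push_cast
    ring
  simp_rw [h2]
  rw [← Complex.exp_sum]
  congr 1
  push_cast
  rw [Finset.mul_sum, ← Finset.sum_neg_distrib, Finset.sum_div]

lemma gaussian_lin_law {ι : Type*} [Fintype ι] (σ : ℝ≥0) (b : ι → ℝ) :
    (Measure.pi fun _ : ι => gaussianReal 0 σ).map (fun w => ∑ i, b i * w i)
      = gaussianReal 0 (σ * Real.toNNReal (∑ i, b i ^ 2)) := by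
  have hm : Measurable (fun w : ι → ℝ => ∑ i, b i * w i) := by fun_prop
  have : IsProbabilityMeasure ((Measure.pi fun _ : ι => gaussianReal 0 σ).map
      (fun w => ∑ i, b i * w i)) := Measure.isProbabilityMeasure_map hm.aemeasurable
  apply Measure.ext_of_charFun
  ext t
  rw [charFun_gaussianReal, charFun_apply_real, integral_map hm.aemeasurable (by fun_prop)]
  have := gaussian_lin_exp σ (fun i => t * b i)
  have e : ∀ w : ι → ℝ, (t : ℂ) * ((∑ i, b i * w i : ℝ) : ℂ) * Complex.I
      = ((∑ i, (t * b i) * w i : ℝ) : ℂ) * Complex.I := by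
    intro w
    push_cast
    rw [Finset.mul_sum]
    simp_rw [mul_assoc]
  simp_rw [e]
  rw [this]
  congr 1
  have hn : 0 ≤ ∑ i, b i ^ 2 := Finset.sum_nonneg fun i _ => sq_nonneg _
  simp only [NNReal.coe_mul, Real.coe_toNNReal _ hn]
  push_cast
  simp_rw [mul_pow, ← Finset.mul_sum]
  ring

/-- Laplace transform of the square of a Gaussian. -/
lemma gaussian_sq_laplace (v : ℝ≥0) (hv : v ≠ 0) (l : ℝ) (hl : 0 ≤ l) :
    ∫ t, Real.exp (-l * t ^ 2) ∂(gaussianReal 0 v) = (√(1 + 2 * l * v))⁻¹ := by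
  rw [integral_gaussianReal_eq_integral_smul hv]
  have hv' : (0 : ℝ) < v := by positivity
  have : ∀ x : ℝ, gaussianPDFReal 0 v x • Real.exp (-l * x ^ 2)
      = (√(2 * π * v))⁻¹ * Real.exp (-(l + 1 / (2 * v)) * x ^ 2) := by
    intro x
    rw [gaussianPDFReal, smul_eq_mul, mul_assoc, ← Real.exp_add]
    congr 2
    field_simp
    ring
  simp_rw [this]
  rw [integral_const_mul, integral_gaussian, ← Real.sqrt_inv, ← Real.sqrt_inv, ← Real.sqrt_mul (by positivity)]
  congr 1
  have := Real.pi_pos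
  field_simp
  ring

lemma gaussian_abs_laplace (v : ℝ≥0) (hv : v ≠ 0) (l : ℝ) (hl : 0 ≤ l) (h : 16 ≤ l ^ 2 * v) :
    ∫ t, Real.exp (-l * |t|) ∂(gaussianReal 0 v) ≤ 1 / 2 := by
  have hv' : (0 : ℝ) < v := by positivity
  have hl' : 0 < l := by
    rcases hl.eq_or_lt with h0 | h0
    · rw [← h0] at h; norm_num at h
    · exact h0
  have hpt : ∀ t : ℝ, Real.exp (-l * |t|) ≤ Real.exp (-(4 / v) * t ^ 2) + Real.exp (-4) := by
    intro t
    by_cases hc : (4 / v) * |t| ≤ l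
    · have : Real.exp (-l * |t|) ≤ Real.exp (-(4 / v) * t ^ 2) := by
        apply Real.exp_le_exp.2
        rw [← sq_abs t]
        nlinarith [abs_nonneg t]
      have := Real.exp_pos (-4)
      linarith
    · push Not at hc
      have : Real.exp (-l * |t|) ≤ Real.exp (-4) := by
        apply Real.exp_le_exp.2
        rw [div_mul_eq_mul_div, lt_div_iff₀ hv'] at hc
        nlinarith
      have := Real.exp_pos (-(4 / v) * t ^ 2)
      linarith
  have hi : Integrable (fun t : ℝ => Real.exp (-(4 / v) * t ^ 2)) (gaussianReal 0 v) := by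
    apply Integrable.of_bound (C := 1) (by fun_prop)
    filter_upwards with t
    rw [Real.norm_eq_abs, abs_of_pos (Real.exp_pos _)]
    apply Real.exp_le_one_iff.2
    have : 0 ≤ (4 / (v:ℝ)) * t ^ 2 := by positivity
    linarith
  have hi2 : Integrable (fun t : ℝ => Real.exp (-l * |t|)) (gaussianReal 0 v) := by
    apply Integrable.of_bound (C := 1) (by fun_prop)
    filter_upwards with t
    rw [Real.norm_eq_abs, abs_of_pos (Real.exp_pos _)]
    apply Real.exp_le_one_iff.2
    have : 0 ≤ l * |t| := by positivity
    linarith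
  calc _ ≤ ∫ t, (Real.exp (-(4 / v) * t ^ 2) + Real.exp (-4)) ∂(gaussianReal 0 v) :=
        integral_mono hi2 (hi.add (integrable_const _)) hpt
    _ = (√(1 + 2 * (4 / v) * v))⁻¹ + Real.exp (-4) := by
        rw [integral_add hi (integrable_const _), gaussian_sq_laplace v hv _ (by positivity)]
        simp
    _ ≤ 1 / 2 := by
        have e1 : 1 + 2 * (4 / (v:ℝ)) * v = 3 ^ 2 := by field_simp; norm_num
        rw [e1, Real.sqrt_sq (by norm_num)]
        have : (6:ℝ) ≤ Real.exp 4 := by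
          have := Real.quadratic_le_exp_of_nonneg (x := 4) (by norm_num)
          linarith
        rw [Real.exp_neg]
        have : (Real.exp 4)⁻¹ ≤ (6:ℝ)⁻¹ := inv_anti₀ (by norm_num) this
        linarith [this]

lemma gaussian_lintegral_sq (v : ℝ≥0) :
    ∫⁻ t, ENNReal.ofReal (t ^ 2) ∂(gaussianReal 0 v) = v := by
  have hi : Integrable (fun t : ℝ => t ^ 2) (gaussianReal 0 v) :=
    (memLp_id_gaussianReal (μ := 0) (v := v) 2).integrable_sq
  rw [← ofReal_integral_eq_lintegral_ofReal hi (by filter_upwards with t; positivity)]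
  have h := variance_fun_id_gaussianReal (μ := 0) (v := v)
  rw [variance_of_integral_eq_zero (by fun_prop) (by simp)] at h
  rw [h]
  simp

/-! ### The linear part -/

/-- `∑ₛ vₛ ∑ₐ Pₐ xₛ ∈ ℝᵏ`. -/
def Ysum (m n k : ℕ) (v : Fin n → ℝ) (x : Fin n → Fin (m * k) → ℝ) (i : Fin k) : ℝ :=
  ∑ s, v s * ∑ a, patch m k a (x s) i

lemma patch_eq (m k : ℕ) (a : Fin m) (v : Fin (m * k) → ℝ) (i : Fin k) :
    patch m k a v i = v (finProdFinEquiv (a, i)) := by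
  unfold patch
  congr 1
  ext
  simp [finProdFinEquiv]
  ring

lemma sum_patch (m k : ℕ) (w : Fin k → ℝ) (v : Fin (m * k) → ℝ) :
    ∑ i, w i * ∑ a, patch m k a v i
      = ∑ c : Fin (m * k), w (finProdFinEquiv.symm c).2 * v c := by
  rw [← finProdFinEquiv.sum_comp, Fintype.sum_prod_type_right]
  simp_rw [patch_eq, Finset.mul_sum, Equiv.symm_apply_apply]

lemma sum_patch_sq (m k : ℕ) (w : Fin k → ℝ) :
    ∑ c : Fin (m * k), w (finProdFinEquiv.symm c).2 ^ 2 = m * ∑ i, w i ^ 2 := by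
  rw [← finProdFinEquiv.sum_comp, Fintype.sum_prod_type]
  simp_rw [Equiv.symm_apply_apply]
  simp

lemma measurable_Ysum (m n k : ℕ) (v : Fin n → ℝ) : Measurable (Ysum m n k v) := by
  unfold Ysum patch
  fun_prop

instance (d : ℕ) : IsProbabilityMeasure (stdGaussianVec d) := by
  unfold stdGaussianVec; infer_instance

instance (d : ℕ) : IsProbabilityMeasure (hiddenWeightLaw d) := by
  unfold hiddenWeightLaw; infer_instance

lemma Ysum_law (m n k : ℕ) (v : Fin n → ℝ) :
    (Measure.pi fun _ : Fin n => stdGaussianVec (m * k)).map (Ysum m n k v)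
      = Measure.pi fun _ : Fin k => gaussianReal 0 (Real.toNNReal (m * ∑ s, v s ^ 2)) := by
  have hm := measurable_Ysum m n k v
  have : IsProbabilityMeasure ((Measure.pi fun _ : Fin n => stdGaussianVec (m * k)).map
      (Ysum m n k v)) := Measure.isProbabilityMeasure_map hm.aemeasurable
  apply Measure.ext_of_charFunDual
  ext L
  rw [charFunDual_apply, charFunDual_apply, integral_map hm.aemeasurable (by fun_prop)]
  set w : Fin k → ℝ := fun i => L (Pi.single i 1) with hw
  have hL : ∀ y : Fin k → ℝ, L y = ∑ i, w i * y i := by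
    intro y
    conv_lhs => rw [pi_eq_sum_univ' y]
    rw [map_sum]
    apply Finset.sum_congr rfl
    intro i _
    rw [map_smul, smul_eq_mul, mul_comm, hw]
  simp_rw [hL]
  rw [gaussian_lin_exp]
  have e1 : ∀ x : Fin n → Fin (m * k) → ℝ,
      Complex.exp (((∑ i, w i * Ysum m n k v x i : ℝ) : ℂ) * Complex.I)
      = ∏ s, Complex.exp (((∑ c : Fin (m * k),
          (v s * w (finProdFinEquiv.symm c).2) * x s c : ℝ) : ℂ) * Complex.I) := by
    intro x
    rw [← Complex.exp_sum, ← Finset.sum_mul]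
    congr 2
    rw [← Complex.ofReal_sum]
    congr 1
    simp_rw [mul_assoc, ← Finset.mul_sum, ← sum_patch]
    unfold Ysum
    simp_rw [Finset.mul_sum (s := (Finset.univ : Finset (Fin n)))]
    rw [Finset.sum_comm]
    apply Finset.sum_congr rfl
    intro s _
    rw [Finset.mul_sum]
    apply Finset.sum_congr rfl
    intro i _
    ring
  simp_rw [e1]
  rw [integral_fintype_prod_eq_prod (f := fun s (y : Fin (m * k) → ℝ) =>
    Complex.exp (((∑ c : Fin (m * k),
          (v s * w (finProdFinEquiv.symm c).2) * y c : ℝ) : ℂ) * Complex.I))]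
  unfold stdGaussianVec
  simp_rw [gaussian_lin_exp]
  rw [← Complex.exp_sum]
  congr 1
  have hn : 0 ≤ m * ∑ s, v s ^ 2 := by positivity
  rw [Real.coe_toNNReal _ hn]
  simp_rw [mul_pow, ← Finset.mul_sum, sum_patch_sq]
  rw [← Finset.sum_div, Finset.sum_neg_distrib, ← Complex.ofReal_sum]
  congr 3
  rw [Finset.mul_sum (s := (Finset.univ : Finset (Fin n))), Finset.sum_mul]
  apply Finset.sum_congr rfl
  intro s _
  push_cast
  ring

/-- Small ball estimate for `Ysum`. -/
lemma Ysum_small_ball (m n k : ℕ) (hm : 0 < m) (v : Fin n → ℝ) (hv : 1 / 4 ≤ ∑ s, v s ^ 2)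
    (t : ℝ) (ht : 0 < t) :
    (Measure.pi fun _ : Fin n => stdGaussianVec (m * k)).real
      {x | ∑ i, Ysum m n k v x i ^ 2 ≤ t ^ 2 * m * k / 4} ≤ (3 * t) ^ k := by
  have hM : (0 : ℝ) < m := by exact_mod_cast hm
  set τ : ℝ := m * ∑ s, v s ^ 2 with hτ
  have hτ4 : (m : ℝ) / 4 ≤ τ := by rw [hτ]; nlinarith
  have hτ0 : 0 < τ := by linarith [hM]
  have hτn : Real.toNNReal τ ≠ 0 := by simpa using hτ0
  set P := Measure.pi fun _ : Fin k => gaussianReal 0 (Real.toNNReal τ) with hP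
  have hS : MeasurableSet {y : Fin k → ℝ | ∑ i, y i ^ 2 ≤ t ^ 2 * m * k / 4} :=
    measurableSet_le (by fun_prop) (by fun_prop)
  have h1 : (Measure.pi fun _ : Fin n => stdGaussianVec (m * k)).real
      {x | ∑ i, Ysum m n k v x i ^ 2 ≤ t ^ 2 * m * k / 4}
      = P.real {y : Fin k → ℝ | ∑ i, y i ^ 2 ≤ t ^ 2 * m * k / 4} := by
    rw [hP, hτ, ← Ysum_law, map_measureReal_apply (measurable_Ysum m n k v) hS]
    rfl
  rw [h1]
  set l : ℝ := 1 / (t ^ 2 * τ) with hl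
  have hl0 : 0 < l := by positivity
  have hexp : ∀ y : Fin k → ℝ, Real.exp (-l * ∑ i, y i ^ 2) = ∏ i, Real.exp (-l * y i ^ 2) := by
    intro y
    rw [← Real.exp_sum, Finset.mul_sum]
  have h_lap : ∫ y, Real.exp (-l * ∑ i, y i ^ 2) ∂P = ((√(1 + 2 / t ^ 2))⁻¹) ^ k := by
    simp_rw [hexp]
    rw [hP, integral_fintype_prod_eq_prod (f := fun _ (s : ℝ) => Real.exp (-l * s ^ 2))]
    rw [gaussian_sq_laplace _ hτn _ hl0.le]
    simp only [Finset.prod_const, Finset.card_univ, Fintype.card_fin]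
    rw [Real.coe_toNNReal _ hτ0.le, hl]
    congr 4
    field_simp
  have hmk := mul_meas_ge_le_integral_of_nonneg (μ := P)
    (f := fun y : Fin k → ℝ => Real.exp (-l * ∑ i, y i ^ 2))
    (by filter_upwards with y; positivity)
    (by
      apply Integrable.of_bound (C := 1) (Measurable.aestronglyMeasurable (by fun_prop))
      filter_upwards with y
      rw [Real.norm_eq_abs, abs_of_pos (Real.exp_pos _)]
      apply Real.exp_le_one_iff.2
      have : 0 ≤ l * ∑ i, y i ^ 2 := by positivity
      linarith) (Real.exp (-(k:ℝ)))
  rw [h_lap] at hmk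
  have hsub : P.real {y : Fin k → ℝ | ∑ i, y i ^ 2 ≤ t ^ 2 * m * k / 4}
      ≤ P.real {y : Fin k → ℝ | Real.exp (-(k:ℝ)) ≤ Real.exp (-l * ∑ i, y i ^ 2)} := by
    apply measureReal_mono _ (measure_ne_top _ _)
    intro y hy
    simp only [Set.mem_ofPred_eq] at hy ⊢
    apply Real.exp_le_exp.2
    have : l * ∑ i, y i ^ 2 ≤ l * (t ^ 2 * τ * k) := by
      apply mul_le_mul_of_nonneg_left _ hl0.le
      refine hy.trans ?_
      have : t ^ 2 * k * (m / 4) ≤ t ^ 2 * k * τ := by gcongr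
      linarith
    have e : l * (t ^ 2 * τ * k) = k := by rw [hl]; field_simp
    linarith
  have hek : Real.exp (-(k:ℝ)) = (Real.exp 1)⁻¹ ^ k := by
    rw [← Real.exp_neg, ← Real.exp_nat_mul]; congr 1; ring
  have hs : (√(1 + 2 / t ^ 2))⁻¹ ≤ t := by
    apply inv_le_of_inv_le₀ ht
    apply Real.le_sqrt_of_sq_le
    rw [inv_pow]
    have : 0 < (t^2)⁻¹ := by positivity
    rw [div_eq_mul_inv]
    linarith
  have hpos : 0 < Real.exp (-(k:ℝ)) := Real.exp_pos _
  have : P.real {y : Fin k → ℝ | ∑ i, y i ^ 2 ≤ t ^ 2 * m * k / 4}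
      ≤ Real.exp k * t ^ k := by
    have h3 : Real.exp (-(k:ℝ)) * P.real {y : Fin k → ℝ | ∑ i, y i ^ 2 ≤ t ^ 2 * m * k / 4} ≤ t ^ k :=
      (mul_le_mul_of_nonneg_left hsub hpos.le).trans (hmk.trans (by gcongr))
    have : Real.exp k * Real.exp (-(k:ℝ)) = 1 := by rw [← Real.exp_add]; simp
    calc _ = Real.exp k * (Real.exp (-(k:ℝ)) * P.real {y : Fin k → ℝ | ∑ i, y i ^ 2 ≤ t ^ 2 * m * k / 4}) := by
          rw [← mul_assoc, this, one_mul]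
      _ ≤ _ := by gcongr
  refine this.trans ?_
  have : Real.exp k = (Real.exp 1) ^ k := by rw [← Real.exp_nat_mul]; simp
  rw [this, ← mul_pow]
  gcongr
  have := Real.exp_one_lt_d9
  linarith

/-! ### The weights -/

/-- The row of `A_β v` for a weight vector `w`. -/
def gfun (m n k : ℕ) (x : Fin n → Fin (m * k) → ℝ) (v : Fin n → ℝ) (w : Fin k → ℝ) : ℝ :=
  ∑ s, (∑ a : Fin m, relu (dot w (patch m k a (x s)))) * v s

lemma AbetaApp_eq (m n p k : ℕ) (x : Fin n → Fin (m * k) → ℝ) (W : Fin p → Fin k → ℝ)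
    (v : Fin n → ℝ) (j : Fin p) : AbetaApp m n p k x W v j = gfun m n k x v (W j) := rfl

lemma relu_sub_neg (t : ℝ) : relu t - relu (-t) = t := by
  unfold relu
  rcases le_total 0 t with h | h
  · rw [max_eq_right h, max_eq_left (by linarith)]; ring
  · rw [max_eq_left h, max_eq_right (by linarith)]; ring

lemma dot_neg (k : ℕ) (w y : Fin k → ℝ) : dot (-w) y = - dot w y := by
  unfold dot; simp

lemma gfun_odd (m n k : ℕ) (x : Fin n → Fin (m * k) → ℝ) (v : Fin n → ℝ) (w : Fin k → ℝ) :
    gfun m n k x v w - gfun m n k x v (-w) = ∑ i, Ysum m n k v x i * w i := by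
  unfold gfun
  rw [← Finset.sum_sub_distrib]
  simp_rw [← sub_mul, ← Finset.sum_sub_distrib, dot_neg, relu_sub_neg]
  unfold Ysum dot
  simp_rw [Finset.sum_mul]
  rw [Finset.sum_comm (s := (Finset.univ : Finset (Fin k)))]
  apply Finset.sum_congr rfl
  intro s _
  simp_rw [Finset.mul_sum, Finset.sum_mul]
  rw [Finset.sum_comm]
  apply Finset.sum_congr rfl
  intro i _
  apply Finset.sum_congr rfl
  intro a _
  ring

lemma measurable_relu : Measurable relu := by unfold relu; fun_prop

lemma measurable_gfun2 (m n k : ℕ) (v : Fin n → ℝ) :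
    Measurable (fun q : (Fin n → Fin (m * k) → ℝ) × (Fin k → ℝ) => gfun m n k q.1 v q.2) := by
  unfold gfun relu dot patch
  fun_prop

lemma measurable_gfun (m n k : ℕ) (x : Fin n → Fin (m * k) → ℝ) (v : Fin n → ℝ) :
    Measurable (gfun m n k x v) := by
  unfold gfun relu dot patch
  fun_prop

lemma hiddenWeightLaw_neg (k : ℕ) : (hiddenWeightLaw k).map (fun w => -w) = hiddenWeightLaw k := by
  unfold hiddenWeightLaw
  have h := Measure.pi_map_pi (μ := fun _ : Fin k => gaussianReal 0 ((k : ℝ≥0))⁻¹)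
    (f := fun _ (t : ℝ) => -t) (fun _ => by fun_prop)
  simp_rw [gaussianReal_map_neg, neg_zero] at h
  exact h

lemma integrable_exp_neg {Ω : Type*} [MeasurableSpace Ω] (μ : Measure Ω) [IsProbabilityMeasure μ]
    (f : Ω → ℝ) (hf : Measurable f) (l : ℝ) (hl : 0 ≤ l) (h0 : ∀ x, 0 ≤ f x) :
    Integrable (fun x => Real.exp (-l * f x)) μ := by
  apply Integrable.of_bound (C := 1) (Measurable.aestronglyMeasurable (by fun_prop))
  filter_upwards with x
  rw [Real.norm_eq_abs, abs_of_pos (Real.exp_pos _)]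
  apply Real.exp_le_one_iff.2
  have := mul_nonneg hl (h0 x)
  linarith

lemma gfun_laplace (m n k : ℕ) (hm : 0 < m) (hk : 0 < k) (x : Fin n → Fin (m * k) → ℝ)
    (v : Fin n → ℝ) (t : ℝ) (ht : 0 < t)
    (hY : t ^ 2 * m * k / 4 < ∑ i, Ysum m n k v x i ^ 2) :
    ∫ w, Real.exp (-(16 / (t * √m)) * |gfun m n k x v w|) ∂(hiddenWeightLaw k) ≤ 3 / 4 := by
  have hM : (0 : ℝ) < m := by exact_mod_cast hm
  have hK : (0 : ℝ) < k := by exact_mod_cast hk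
  have hsm : 0 < √(m : ℝ) := Real.sqrt_pos.2 hM
  set l : ℝ := 16 / (t * √m) with hl
  have hl0 : 0 < l := by positivity
  have hg := measurable_gfun m n k x v
  have hi1 := integrable_exp_neg (hiddenWeightLaw k) (fun w => |gfun m n k x v w|)
    (by fun_prop) l hl0.le (fun w => abs_nonneg _)
  have hi2 := integrable_exp_neg (hiddenWeightLaw k) (fun w => |gfun m n k x v (-w)|)
    (by fun_prop) l hl0.le (fun w => abs_nonneg _)
  set o : (Fin k → ℝ) → ℝ := fun w => ∑ i, (Ysum m n k v x i / 2) * w i with ho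
  have hom : Measurable o := by rw [ho]; fun_prop
  have hi3 := integrable_exp_neg (hiddenWeightLaw k) (fun w => |o w|)
    (by fun_prop) l hl0.le (fun w => abs_nonneg _)
  have hsym : ∫ w, Real.exp (-l * |gfun m n k x v w|) ∂(hiddenWeightLaw k)
      = ∫ w, Real.exp (-l * |gfun m n k x v (-w)|) ∂(hiddenWeightLaw k) := by
    conv_lhs => rw [← hiddenWeightLaw_neg]
    rw [integral_map (by fun_prop) (Measurable.aestronglyMeasurable (by fun_prop))]
  have hpt : ∀ w, Real.exp (-l * |gfun m n k x v w|) + Real.exp (-l * |gfun m n k x v (-w)|)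
      ≤ 1 + Real.exp (-l * |o w|) := by
    intro w
    have h1 := gfun_odd m n k x v w
    have h2 : 2 * o w = gfun m n k x v w - gfun m n k x v (-w) := by
      rw [h1, ho]
      simp only [Finset.mul_sum]
      apply Finset.sum_congr rfl
      intro i _
      ring
    have h3 : 2 * |o w| ≤ |gfun m n k x v w| + |gfun m n k x v (-w)| := by
      have : 2 * |o w| = |2 * o w| := by rw [abs_mul]; norm_num
      rw [this, h2]
      exact abs_sub _ _
    have hA : Real.exp (-l * |gfun m n k x v w|) ≤ 1 := by
      apply Real.exp_le_one_iff.2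
      have := mul_nonneg hl0.le (abs_nonneg (gfun m n k x v w))
      linarith
    have hB : Real.exp (-l * |gfun m n k x v (-w)|) ≤ 1 := by
      apply Real.exp_le_one_iff.2
      have := mul_nonneg hl0.le (abs_nonneg (gfun m n k x v (-w)))
      linarith
    rcases le_total (|o w|) (|gfun m n k x v w|) with h | h
    · have : Real.exp (-l * |gfun m n k x v w|) ≤ Real.exp (-l * |o w|) := by
        apply Real.exp_le_exp.2
        nlinarith
      linarith
    · have : Real.exp (-l * |gfun m n k x v (-w)|) ≤ Real.exp (-l * |o w|) := by
        apply Real.exp_le_exp.2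
        have : |o w| ≤ |gfun m n k x v (-w)| := by linarith
        nlinarith
      linarith
  have hlaw := gaussian_lin_law ((k : ℝ≥0))⁻¹ (fun i => Ysum m n k v x i / 2)
  have hsumpos : 0 < ∑ i, (Ysum m n k v x i / 2) ^ 2 := by
    simp_rw [div_pow]
    rw [← Finset.sum_div]
    have : 0 < t ^ 2 * m * k / 4 := by positivity
    have : 0 < ∑ i, Ysum m n k v x i ^ 2 := by linarith
    positivity
  have hio : ∫ w, Real.exp (-l * |o w|) ∂(hiddenWeightLaw k) ≤ 1 / 2 := by
    have e := integral_map (μ := hiddenWeightLaw k) (φ := o) hom.aemeasurable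
      (f := fun s : ℝ => Real.exp (-l * |s|)) (Measurable.aestronglyMeasurable (by fun_prop))
    rw [← e]
    unfold hiddenWeightLaw
    rw [ho, hlaw]
    apply gaussian_abs_laplace _ _ _ hl0.le
    · rw [NNReal.coe_mul, Real.coe_toNNReal _ hsumpos.le]
      simp_rw [div_pow]
      rw [← Finset.sum_div, hl]
      push_cast
      rw [div_pow, mul_pow, Real.sq_sqrt hM.le]
      have : 16 * (t ^ 2 * m * k) ≤ 64 * ∑ i, Ysum m n k v x i ^ 2 := by linarith
      have h5 : 16 * (t ^ 2 * m * k) / (t ^ 2 * m * k) ≤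
        64 * (∑ i, Ysum m n k v x i ^ 2) / (t ^ 2 * m * k) := by gcongr
      rw [mul_div_cancel_right₀ _ (by positivity)] at h5
      refine h5.trans (le_of_eq ?_)
      field_simp
      ring
    · apply mul_ne_zero
      · simpa using hk.ne'
      · simpa using hsumpos
  have : 2 * ∫ w, Real.exp (-l * |gfun m n k x v w|) ∂(hiddenWeightLaw k) ≤ 1 + 1 / 2 := by
    calc _ = ∫ w, (Real.exp (-l * |gfun m n k x v w|) + Real.exp (-l * |gfun m n k x v (-w)|))
          ∂(hiddenWeightLaw k) := by
          rw [integral_add hi1 hi2, ← hsym]; ring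
      _ ≤ ∫ w, (1 + Real.exp (-l * |o w|)) ∂(hiddenWeightLaw k) :=
          integral_mono (hi1.add hi2) ((integrable_const _).add hi3) hpt
      _ = 1 + ∫ w, Real.exp (-l * |o w|) ∂(hiddenWeightLaw k) := by
          rw [integral_add (integrable_const _) hi3]; simp
      _ ≤ _ := by linarith
  linarith

lemma weights_small_ball (m n p k : ℕ) (hm : 0 < m) (hk : 0 < k) (x : Fin n → Fin (m * k) → ℝ)
    (v : Fin n → ℝ) (t : ℝ) (ht : 0 < t)
    (hY : t ^ 2 * m * k / 4 < ∑ i, Ysum m n k v x i ^ 2) :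
    (Measure.pi fun _ : Fin p => hiddenWeightLaw k).real
      {W | ∑ j, |AbetaApp m n p k x W v j| ≤ p * (t * √m / 128)} ≤ Real.exp (-(p / 8 : ℝ)) := by
  have hM : (0 : ℝ) < m := by exact_mod_cast hm
  have hsm : 0 < √(m : ℝ) := Real.sqrt_pos.2 hM
  have hL := gfun_laplace m n k hm hk x v t ht hY
  set l : ℝ := 16 / (t * √m) with hl
  have hl0 : 0 < l := by positivity
  set P := Measure.pi fun _ : Fin p => hiddenWeightLaw k with hP
  have hg := measurable_gfun m n k x v
  have h_lap : ∫ W, Real.exp (-l * ∑ j, |AbetaApp m n p k x W v j|) ∂P ≤ (3 / 4) ^ p := by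
    have hexp : ∀ W : Fin p → Fin k → ℝ, Real.exp (-l * ∑ j, |AbetaApp m n p k x W v j|)
        = ∏ j, Real.exp (-l * |gfun m n k x v (W j)|) := by
      intro W
      rw [← Real.exp_sum, Finset.mul_sum]
      rfl
    simp_rw [hexp]
    rw [hP, integral_fintype_prod_eq_prod
      (f := fun _ (w : Fin k → ℝ) => Real.exp (-l * |gfun m n k x v w|))]
    simp only [Finset.prod_const, Finset.card_univ, Fintype.card_fin]
    gcongr
  have hmk := mul_meas_ge_le_integral_of_nonneg (μ := P)
    (f := fun W : Fin p → Fin k → ℝ => Real.exp (-l * ∑ j, |AbetaApp m n p k x W v j|))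
    (by filter_upwards with y; positivity)
    (integrable_exp_neg P _ (by
      simp_rw [AbetaApp_eq]
      fun_prop) l hl0.le (fun W => Finset.sum_nonneg fun j _ => abs_nonneg _))
    (Real.exp (-(p / 8 : ℝ)))
  have hsub : P.real {W | ∑ j, |AbetaApp m n p k x W v j| ≤ p * (t * √m / 128)}
      ≤ P.real {W | Real.exp (-(p / 8 : ℝ))
          ≤ Real.exp (-l * ∑ j, |AbetaApp m n p k x W v j|)} := by
    apply measureReal_mono _ (measure_ne_top _ _)
    intro y hy
    simp only [Set.mem_ofPred_eq] at hy ⊢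
    apply Real.exp_le_exp.2
    have := mul_le_mul_of_nonneg_left hy hl0.le
    have e : l * (p * (t * √m / 128)) = p / 8 := by rw [hl]; field_simp; ring
    linarith
  have h34 : (3 / 4 : ℝ) ^ p ≤ Real.exp (-(p / 8 : ℝ)) * Real.exp (-(p / 8 : ℝ)) := by
    have : (3 / 4 : ℝ) ≤ Real.exp (-(1 / 4)) := by
      have := Real.add_one_le_exp (-(1 / 4 : ℝ)); linarith
    calc (3 / 4 : ℝ) ^ p ≤ (Real.exp (-(1 / 4))) ^ p := by gcongr
      _ = _ := by rw [← Real.exp_nat_mul, ← Real.exp_add]; congr 1; ring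
  have hpos : 0 < Real.exp (-(p / 8 : ℝ)) := Real.exp_pos _
  have := (mul_le_mul_of_nonneg_left hsub hpos.le).trans (hmk.trans (h_lap.trans h34))
  exact le_of_mul_le_mul_left this hpos

lemma point_bound (m n p k : ℕ) (hm : 0 < m) (hk : 0 < k)
    (v : Fin n → ℝ) (hv : 1 / 4 ≤ ∑ s, v s ^ 2) (t : ℝ) (ht : 0 < t) :
    ((Measure.pi fun _ : Fin n => stdGaussianVec (m * k)).prod
      (Measure.pi fun _ : Fin p => hiddenWeightLaw k))
      {q | ∑ j, |AbetaApp m n p k q.1 q.2 v j| ≤ p * (t * √m / 128)}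
      ≤ ENNReal.ofReal ((3 * t) ^ k + Real.exp (-(p / 8 : ℝ))) := by
  have hS : MeasurableSet {q : (Fin n → Fin (m * k) → ℝ) × (Fin p → Fin k → ℝ) |
      ∑ j, |AbetaApp m n p k q.1 q.2 v j| ≤ p * (t * √m / 128)} := by
    apply measurableSet_le _ measurable_const
    unfold AbetaApp Abeta relu dot patch
    fun_prop
  rw [Measure.prod_apply hS]
  set B : Set (Fin n → Fin (m * k) → ℝ) := {x | ∑ i, Ysum m n k v x i ^ 2 ≤ t ^ 2 * m * k / 4} with hB
  have hBm : MeasurableSet B := by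
    apply measurableSet_le _ measurable_const
    have := measurable_Ysum m n k v
    fun_prop
  have hle : ∀ x, (Measure.pi fun _ : Fin p => hiddenWeightLaw k) (Prod.mk x ⁻¹'
      {q : (Fin n → Fin (m * k) → ℝ) × (Fin p → Fin k → ℝ) |
      ∑ j, |AbetaApp m n p k q.1 q.2 v j| ≤ p * (t * √m / 128)})
      ≤ B.indicator 1 x + ENNReal.ofReal (Real.exp (-(p / 8 : ℝ))) := by
    intro x
    by_cases hx : x ∈ B
    · rw [Set.indicator_of_mem hx]
      exact prob_le_one.trans (by simp)
    · rw [Set.indicator_of_notMem hx, zero_add]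
      have := weights_small_ball m n p k hm hk x v t ht (not_le.1 hx)
      rw [← ofReal_measureReal (measure_ne_top _ _)]
      exact ENNReal.ofReal_le_ofReal this
  refine (lintegral_mono hle).trans ?_
  rw [lintegral_add_right _ measurable_const, lintegral_indicator_one hBm, lintegral_const,
    measure_univ, mul_one, ENNReal.ofReal_add (by positivity) (by positivity)]
  gcongr
  have := Ysum_small_ball m n k hm v hv t ht
  rw [← ofReal_measureReal (measure_ne_top _ _)]
  exact ENNReal.ofReal_le_ofReal this

/-! ### Moments and noise -/

lemma dot_moment (k : ℕ) (y : Fin k → ℝ) :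
    ∫⁻ w, ENNReal.ofReal ((dot w y) ^ 2) ∂(hiddenWeightLaw k)
      = ENNReal.ofReal ((k : ℝ)⁻¹ * ∑ i, y i ^ 2) := by
  have hd : ∀ w : Fin k → ℝ, dot w y = ∑ i, y i * w i := by
    intro w; unfold dot; simp_rw [mul_comm]
  simp_rw [hd]
  have hm : Measurable (fun w : Fin k → ℝ => ∑ i, y i * w i) := by fun_prop
  have e := lintegral_map (μ := hiddenWeightLaw k) (g := fun w : Fin k → ℝ => ∑ i, y i * w i)
    (f := fun s : ℝ => ENNReal.ofReal (s ^ 2)) (by fun_prop) hm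
  rw [← e]
  unfold hiddenWeightLaw
  rw [gaussian_lin_law, gaussian_lintegral_sq, ← ENNReal.ofReal_coe_nnreal]
  congr 1
  rw [NNReal.coe_mul, Real.coe_toNNReal _ (Finset.sum_nonneg fun i _ => sq_nonneg _)]
  simp

lemma coord_moment (m n k : ℕ) (s : Fin n) (c : Fin (m * k)) :
    ∫⁻ x, ENNReal.ofReal ((x s c) ^ 2) ∂(Measure.pi fun _ : Fin n => stdGaussianVec (m * k))
      = 1 := by
  have e1 := (measurePreserving_eval (fun _ : Fin n => stdGaussianVec (m * k)) s).lintegral_comp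
    (f := fun y : Fin (m * k) → ℝ => ENNReal.ofReal ((y c) ^ 2)) (by fun_prop)
  have e2 := (measurePreserving_eval (fun _ : Fin (m * k) => gaussianReal 0 1) c).lintegral_comp
    (f := fun y : ℝ => ENNReal.ofReal (y ^ 2)) (by fun_prop)
  simp only [Function.eval] at e1 e2
  rw [e1]
  unfold stdGaussianVec
  rw [e2, gaussian_lintegral_sq]
  simp

lemma dot_moment2 (m n p k : ℕ) (hk : 0 < k) (j : Fin p) (s : Fin n) (a : Fin m) :
    ∫⁻ q, ENNReal.ofReal ((dot (q.2 j) (patch m k a (q.1 s))) ^ 2)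
      ∂((Measure.pi fun _ : Fin n => stdGaussianVec (m * k)).prod
      (Measure.pi fun _ : Fin p => hiddenWeightLaw k)) = 1 := by
  have hK : (0 : ℝ) < k := by exact_mod_cast hk
  rw [lintegral_prod _ (by
    apply Measurable.aemeasurable
    unfold dot patch
    fun_prop)]
  have e : ∀ x : Fin n → Fin (m * k) → ℝ,
      ∫⁻ W, ENNReal.ofReal ((dot (W j) (patch m k a (x s))) ^ 2)
        ∂(Measure.pi fun _ : Fin p => hiddenWeightLaw k)
      = ∑ i, ENNReal.ofReal ((k : ℝ)⁻¹) *
          ENNReal.ofReal (x s (finProdFinEquiv (a, i)) ^ 2) := by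
    intro x
    have e1 := (measurePreserving_eval (fun _ : Fin p => hiddenWeightLaw k) j).lintegral_comp
      (f := fun w => ENNReal.ofReal ((dot w (patch m k a (x s))) ^ 2))
      (by unfold dot; fun_prop)
    simp only [Function.eval] at e1
    rw [e1, dot_moment, Finset.mul_sum, ENNReal.ofReal_sum_of_nonneg (fun i _ => by positivity)]
    apply Finset.sum_congr rfl
    intro i _
    rw [ENNReal.ofReal_mul (by positivity), patch_eq]
  simp_rw [e]
  rw [lintegral_finsetSum _ (fun i _ => by fun_prop)]
  have e2 : ∀ i : Fin k, ∫⁻ x : Fin n → Fin (m * k) → ℝ, ENNReal.ofReal ((k : ℝ)⁻¹) *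
          ENNReal.ofReal (x s (finProdFinEquiv (a, i)) ^ 2)
          ∂(Measure.pi fun _ : Fin n => stdGaussianVec (m * k)) = ENNReal.ofReal ((k : ℝ)⁻¹) := by
    intro i
    rw [lintegral_const_mul _ (by fun_prop), coord_moment, mul_one]
  simp_rw [e2]
  rw [Finset.sum_const, Finset.card_univ, Fintype.card_fin, nsmul_eq_mul,
    ← ENNReal.ofReal_natCast, ← ENNReal.ofReal_mul (by positivity), mul_inv_cancel₀ hK.ne',
    ENNReal.ofReal_one]

lemma relu_sq_le (t : ℝ) : relu t ^ 2 ≤ t ^ 2 := by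
  unfold relu
  rcases le_total 0 t with h | h
  · rw [max_eq_right h]
  · rw [max_eq_left h]; nlinarith

lemma Abeta_sq_le (m n p k : ℕ) (x : Fin n → Fin (m * k) → ℝ) (W : Fin p → Fin k → ℝ)
    (j : Fin p) (s : Fin n) :
    Abeta m n p k x W j s ^ 2 ≤ m * ∑ a, dot (W j) (patch m k a (x s)) ^ 2 := by
  unfold Abeta
  have h := sq_sum_le_card_mul_sum_sq (s := (Finset.univ : Finset (Fin m)))
    (f := fun a => relu (dot (W j) (patch m k a (x s))))
  simp only [Finset.card_univ, Fintype.card_fin] at h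
  refine h.trans ?_
  exact mul_le_mul_of_nonneg_left (Finset.sum_le_sum fun a _ => relu_sq_le _) (by positivity)

lemma measurable_Abeta (m n p k : ℕ) (j : Fin p) (s : Fin n) :
    Measurable (fun q : (Fin n → Fin (m * k) → ℝ) × (Fin p → Fin k → ℝ) =>
      Abeta m n p k q.1 q.2 j s) := by
  unfold Abeta relu dot patch
  fun_prop

lemma Abeta_moment (m n p k : ℕ) (hk : 0 < k) (j : Fin p) (s : Fin n) :
    ∫⁻ q, ENNReal.ofReal (Abeta m n p k q.1 q.2 j s ^ 2)
      ∂((Measure.pi fun _ : Fin n => stdGaussianVec (m * k)).prod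
      (Measure.pi fun _ : Fin p => hiddenWeightLaw k)) ≤ ENNReal.ofReal ((m : ℝ) ^ 2) := by
  have h1 : ∀ q : (Fin n → Fin (m * k) → ℝ) × (Fin p → Fin k → ℝ),
      ENNReal.ofReal (Abeta m n p k q.1 q.2 j s ^ 2)
      ≤ ENNReal.ofReal m * ∑ a, ENNReal.ofReal (dot (q.2 j) (patch m k a (q.1 s)) ^ 2) := by
    intro q
    rw [← ENNReal.ofReal_sum_of_nonneg (fun i _ => by positivity),
      ← ENNReal.ofReal_mul (by positivity)]
    exact ENNReal.ofReal_le_ofReal (Abeta_sq_le m n p k q.1 q.2 j s)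
  have hmd : ∀ a : Fin m, Measurable (fun q : (Fin n → Fin (m * k) → ℝ) × (Fin p → Fin k → ℝ) =>
      ENNReal.ofReal (dot (q.2 j) (patch m k a (q.1 s)) ^ 2)) := by
    intro a
    unfold dot patch
    fun_prop
  refine (lintegral_mono h1).trans ?_
  rw [lintegral_const_mul _ (by fun_prop), lintegral_finsetSum _ (fun a _ => hmd a)]
  simp_rw [dot_moment2 m n p k hk]
  simp only [Finset.sum_const, Finset.card_univ, Fintype.card_fin, nsmul_eq_mul, mul_one]
  rw [← ENNReal.ofReal_natCast, ← ENNReal.ofReal_mul (by positivity), sq]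

/-- The squared norm of the `j`-th row. -/
def Trow (m n p k : ℕ) (q : (Fin n → Fin (m * k) → ℝ) × (Fin p → Fin k → ℝ)) (j : Fin p) : ℝ :=
  ∑ s, Abeta m n p k q.1 q.2 j s ^ 2

lemma Trow_nonneg (m n p k : ℕ) (q : (Fin n → Fin (m * k) → ℝ) × (Fin p → Fin k → ℝ))
    (j : Fin p) : 0 ≤ Trow m n p k q j := Finset.sum_nonneg fun _ _ => sq_nonneg _

lemma measurable_Trow (m n p k : ℕ) (j : Fin p) :
    Measurable (fun q => Trow m n p k q j) := by
  have := fun s => measurable_Abeta m n p k j s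
  unfold Trow
  fun_prop

lemma Trow_moment (m n p k : ℕ) (hk : 0 < k) (j : Fin p) :
    ∫⁻ q, ENNReal.ofReal (Trow m n p k q j)
      ∂((Measure.pi fun _ : Fin n => stdGaussianVec (m * k)).prod
      (Measure.pi fun _ : Fin p => hiddenWeightLaw k)) ≤ ENNReal.ofReal (n * (m : ℝ) ^ 2) := by
  have hmA := fun s => measurable_Abeta m n p k j s
  unfold Trow
  simp_rw [ENNReal.ofReal_sum_of_nonneg (fun (i : Fin n) (_ : i ∈ Finset.univ) =>
    sq_nonneg (Abeta m n p k _ _ j i))]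
  rw [lintegral_finsetSum _ (fun s _ => by have := hmA s; fun_prop)]
  refine (Finset.sum_le_sum fun s _ => Abeta_moment m n p k hk j s).trans ?_
  simp only [Finset.sum_const, Finset.card_univ, Fintype.card_fin, nsmul_eq_mul]
  rw [ENNReal.ofReal_mul (by positivity), ENNReal.ofReal_natCast]

lemma B1_bound (m n p k : ℕ) (hm : 0 < m) (hn : 0 < n) (hp : 0 < p) (hk : 0 < k)
    (θ : ℝ) (hθ : 0 < θ) :
    ((Measure.pi fun _ : Fin n => stdGaussianVec (m * k)).prod
      (Measure.pi fun _ : Fin p => hiddenWeightLaw k))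
      {q | p * (n * (m : ℝ) ^ 2) / θ ≤ ∑ j, Trow m n p k q j} ≤ ENNReal.ofReal θ := by
  have hM : (0 : ℝ) < m := by exact_mod_cast hm
  have hN : (0 : ℝ) < n := by exact_mod_cast hn
  have hP : (0 : ℝ) < p := by exact_mod_cast hp
  have hmT := fun j => measurable_Trow m n p k j
  have hτ : 0 < p * (n * (m : ℝ) ^ 2) / θ := by positivity
  have hsub : {q : (Fin n → Fin (m * k) → ℝ) × (Fin p → Fin k → ℝ) |
      p * (n * (m : ℝ) ^ 2) / θ ≤ ∑ j, Trow m n p k q j}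
      ⊆ {q | ENNReal.ofReal (p * (n * (m : ℝ) ^ 2) / θ) ≤ ∑ j, ENNReal.ofReal (Trow m n p k q j)} := by
    intro q hq
    simp only [Set.mem_ofPred_eq] at hq ⊢
    rw [← ENNReal.ofReal_sum_of_nonneg (fun j _ => Trow_nonneg m n p k q j)]
    exact ENNReal.ofReal_le_ofReal hq
  refine (measure_mono hsub).trans ((meas_ge_le_lintegral_div (by fun_prop)
    (by simpa using hτ) (by simp)).trans ?_)
  rw [lintegral_finsetSum _ (fun j _ => by have := hmT j; fun_prop)]
  apply ENNReal.div_le_of_le_mul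
  refine (Finset.sum_le_sum fun j _ => Trow_moment m n p k hk j).trans ?_
  simp only [Finset.sum_const, Finset.card_univ, Fintype.card_fin, nsmul_eq_mul]
  rw [← ENNReal.ofReal_mul hθ.le, ← ENNReal.ofReal_natCast, ← ENNReal.ofReal_mul (by positivity)]
  apply ENNReal.ofReal_le_ofReal
  apply le_of_eq
  field_simp

/-- An upper bound for the norm of the `j`-th row. -/
def Rrow (m n p k : ℕ) (q : (Fin n → Fin (m * k) → ℝ) × (Fin p → Fin k → ℝ)) (j : Fin p) : ℝ :=
  m * √n / 2 + (2 * (m * √n))⁻¹ * Trow m n p k q j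

lemma Rrow_nonneg (m n p k : ℕ) (q : (Fin n → Fin (m * k) → ℝ) × (Fin p → Fin k → ℝ))
    (j : Fin p) : 0 ≤ Rrow m n p k q j := by
  have := Trow_nonneg m n p k q j
  unfold Rrow
  positivity

lemma measurable_Rrow (m n p k : ℕ) (j : Fin p) :
    Measurable (fun q => Rrow m n p k q j) := by
  have := measurable_Trow m n p k j
  unfold Rrow
  fun_prop

lemma Rrow_moment (m n p k : ℕ) (hm : 0 < m) (hn : 0 < n) (hk : 0 < k) (j : Fin p) :
    ∫⁻ q, ENNReal.ofReal (Rrow m n p k q j)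
      ∂((Measure.pi fun _ : Fin n => stdGaussianVec (m * k)).prod
      (Measure.pi fun _ : Fin p => hiddenWeightLaw k)) ≤ ENNReal.ofReal (m * √n) := by
  have hM : (0 : ℝ) < m := by exact_mod_cast hm
  have hN : (0 : ℝ) < n := by exact_mod_cast hn
  have hmT := measurable_Trow m n p k j
  have e : ∀ q, ENNReal.ofReal (Rrow m n p k q j) = ENNReal.ofReal (m * √n / 2)
      + ENNReal.ofReal ((2 * (m * √n))⁻¹) * ENNReal.ofReal (Trow m n p k q j) := by
    intro q
    have := Trow_nonneg m n p k q j
    unfold Rrow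
    rw [ENNReal.ofReal_add (by positivity) (by positivity), ENNReal.ofReal_mul (by positivity)]
  simp_rw [e]
  rw [lintegral_add_left measurable_const, lintegral_const_mul _ (by fun_prop), lintegral_const,
    measure_univ, mul_one]
  calc _ ≤ ENNReal.ofReal (m * √n / 2)
      + ENNReal.ofReal ((2 * (m * √n))⁻¹) * ENNReal.ofReal (n * (m : ℝ) ^ 2) := by
        gcongr
        exact Trow_moment m n p k hk j
    _ = ENNReal.ofReal (m * √n) := by
        rw [← ENNReal.ofReal_mul (by positivity), ← ENNReal.ofReal_add (by positivity) (by positivity)]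
        congr 1
        have hs : (n : ℝ) = √n * √n := (Real.mul_self_sqrt hN.le).symm
        have hs0 : 0 < √(n : ℝ) := Real.sqrt_pos.2 hN
        have : (2 * (m * √n))⁻¹ * ((n : ℝ) * (m : ℝ) ^ 2) = m * √n / 2 := by
          conv_lhs => rw [hs]
          rw [Real.sqrt_mul_self hs0.le]
          field_simp
        rw [this]
        ring

lemma mixture_prob (ε : ℝ) (h0 : 0 ≤ ε) (h1 : ε < 1) (Q : Measure ℝ) [IsProbabilityMeasure Q] :
    IsProbabilityMeasure (mixture ε Q) := by
  constructor
  unfold mixture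
  simp only [Measure.add_apply, Measure.smul_apply, measure_univ, smul_eq_mul, mul_one]
  rw [← ENNReal.ofReal_add (by linarith) h0]
  simp

lemma mixture_ne (ε : ℝ) (Q : Measure ℝ) [IsProbabilityMeasure Q] :
    (mixture ε Q) {z | z ≠ 0} ≤ ENNReal.ofReal ε := by
  unfold mixture
  have hS : MeasurableSet {z : ℝ | z ≠ 0} := (measurableSet_singleton 0).compl
  simp only [Measure.add_apply, Measure.smul_apply, smul_eq_mul]
  rw [Measure.dirac_apply' _ hS, Set.indicator_of_notMem (by simp), mul_zero, zero_add]
  exact mul_le_of_le_one_right (by simp) prob_le_one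

lemma B2_bound (m n p k : ℕ) (hm : 0 < m) (hn : 0 < n) (hp : 0 < p) (hk : 0 < k)
    (ε : ℝ) (h0 : 0 ≤ ε) (h1 : ε < 1) (Q : Fin p → Measure ℝ) (hQ : ∀ j, IsProbabilityMeasure (Q j))
    (τ : ℝ) (hτ : 0 < τ) :
    (((Measure.pi fun _ : Fin n => stdGaussianVec (m * k)).prod
      (Measure.pi fun _ : Fin p => hiddenWeightLaw k)).prod
      (Measure.pi fun j : Fin p => mixture ε (Q j)))
      {ω | p * τ ≤ ∑ j, {z : ℝ | z ≠ 0}.indicator (fun _ => Rrow m n p k ω.1 j) (ω.2 j)}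
      ≤ ENNReal.ofReal (ε * (m * √n) / τ) := by
  have hM : (0 : ℝ) < m := by exact_mod_cast hm
  have hN : (0 : ℝ) < n := by exact_mod_cast hn
  have hP : (0 : ℝ) < p := by exact_mod_cast hp
  have hpr := fun j => mixture_prob ε h0 h1 (Q j)
  have hS : MeasurableSet {z : ℝ | z ≠ 0} := (measurableSet_singleton 0).compl
  have hmR := fun j => measurable_Rrow m n p k j
  have hind : ∀ j : Fin p, Measurable (fun z : Fin p → ℝ =>
      {z : ℝ | z ≠ 0}.indicator (1 : ℝ → ENNReal) (z j)) := by
    intro j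
    exact (measurable_one.indicator hS).comp (measurable_pi_apply j)
  have hpτ : 0 < p * τ := by positivity
  have hsub : {ω : ((Fin n → Fin (m * k) → ℝ) × (Fin p → Fin k → ℝ)) × (Fin p → ℝ) |
      p * τ ≤ ∑ j, {z : ℝ | z ≠ 0}.indicator (fun _ => Rrow m n p k ω.1 j) (ω.2 j)}
      ⊆ {ω | ENNReal.ofReal (p * τ) ≤ ∑ j, ENNReal.ofReal (Rrow m n p k ω.1 j) *
        {z : ℝ | z ≠ 0}.indicator (1 : ℝ → ENNReal) (ω.2 j)} := by
    intro ω hq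
    simp only [Set.mem_ofPred_eq] at hq ⊢
    refine (ENNReal.ofReal_le_ofReal hq).trans ?_
    rw [ENNReal.ofReal_sum_of_nonneg (fun j _ =>
      Set.indicator_nonneg (fun _ _ => Rrow_nonneg m n p k _ j) _)]
    apply Finset.sum_le_sum
    intro j _
    by_cases h : ω.2 j ∈ {z : ℝ | z ≠ 0}
    · rw [Set.indicator_of_mem h, Set.indicator_of_mem h]; simp
    · rw [Set.indicator_of_notMem h, Set.indicator_of_notMem h]; simp
  have hmj : ∀ j : Fin p, Measurable
      (fun ω : ((Fin n → Fin (m * k) → ℝ) × (Fin p → Fin k → ℝ)) × (Fin p → ℝ) =>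
      ENNReal.ofReal (Rrow m n p k ω.1 j) *
        {z : ℝ | z ≠ 0}.indicator (1 : ℝ → ENNReal) (ω.2 j)) := by
    intro j
    exact ((hmR j).comp measurable_fst).ennreal_ofReal.mul ((hind j).comp measurable_snd)
  refine (measure_mono hsub).trans ((meas_ge_le_lintegral_div
    (Finset.measurable_sum _ fun j _ => hmj j).aemeasurable
    (ENNReal.ofReal_pos.2 hpτ).ne' ENNReal.ofReal_ne_top).trans ?_)
  rw [lintegral_finsetSum _ (fun j _ => hmj j)]
  apply ENNReal.div_le_of_le_mul
  have hj : ∀ j : Fin p, ∫⁻ ω, ENNReal.ofReal (Rrow m n p k ω.1 j) *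
        {z : ℝ | z ≠ 0}.indicator (1 : ℝ → ENNReal) (ω.2 j)
        ∂(((Measure.pi fun _ : Fin n => stdGaussianVec (m * k)).prod
      (Measure.pi fun _ : Fin p => hiddenWeightLaw k)).prod
      (Measure.pi fun j : Fin p => mixture ε (Q j)))
      ≤ ENNReal.ofReal (m * √n) * ENNReal.ofReal ε := by
    intro j
    rw [lintegral_prod_mul (f := fun q => ENNReal.ofReal (Rrow m n p k q j))
      (g := fun z : Fin p → ℝ => {z : ℝ | z ≠ 0}.indicator (1 : ℝ → ENNReal) (z j))
      (hmR j).ennreal_ofReal.aemeasurable (hind j).aemeasurable]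
    have e1 := (measurePreserving_eval (fun j : Fin p => mixture ε (Q j)) j).lintegral_comp
      (f := {z : ℝ | z ≠ 0}.indicator (1 : ℝ → ENNReal)) (measurable_one.indicator hS)
    simp only [Function.eval] at e1
    rw [e1, lintegral_indicator_one hS]
    gcongr
    · exact Rrow_moment m n p k hm hn hk j
    · exact mixture_ne ε (Q j)
  refine (Finset.sum_le_sum fun j _ => hj j).trans ?_
  simp only [Finset.sum_const, Finset.card_univ, Fintype.card_fin, nsmul_eq_mul]
  rw [← ENNReal.ofReal_mul (by positivity), ← ENNReal.ofReal_natCast,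
    ← ENNReal.ofReal_mul (by positivity), ← ENNReal.ofReal_mul (by positivity)]
  apply ENNReal.ofReal_le_ofReal
  apply le_of_eq
  field_simp

/-! ### The net -/

lemma exists_net (n H : ℕ) (hn : 0 < n) (hH : 2 * n ≤ H) :
    ∃ N : Finset (Fin n → ℝ), (∀ v ∈ N, 1 / 4 ≤ ∑ s, v s ^ 2) ∧ N.card ≤ (2 * H + 1) ^ n ∧
      ∀ u : Fin n → ℝ, ∑ s, u s ^ 2 = 1 → ∃ v ∈ N, ∀ s, |u s - v s| ≤ 1 / H := by
  classical
  have hN : (1 : ℝ) ≤ n := by exact_mod_cast hn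
  have hH' : 2 * (n : ℝ) ≤ H := by exact_mod_cast hH
  have hH0 : (0 : ℝ) < H := by linarith
  refine ⟨((Fintype.piFinset fun _ : Fin n => Finset.Icc (-(H : ℤ)) H).image
    (fun z s => (z s : ℝ) / H)).filter (fun v => 1 / 4 ≤ ∑ s, v s ^ 2), ?_, ?_, ?_⟩
  · intro v hv
    exact (Finset.mem_filter.1 hv).2
  · refine (Finset.card_filter_le _ _).trans (Finset.card_image_le.trans ?_)
    rw [Fintype.card_piFinset]
    simp only [Int.card_Icc, Finset.prod_const, Finset.card_univ, Fintype.card_fin]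
    apply le_of_eq
    congr 1
    omega
  · intro u hu
    have hu1 : ∀ s, |u s| ≤ 1 := by
      intro s
      have : u s ^ 2 ≤ 1 := by
        rw [← hu]
        exact Finset.single_le_sum (f := fun s => u s ^ 2) (fun i _ => sq_nonneg _) (Finset.mem_univ s)
      exact (sq_le_one_iff_abs_le_one _).1 this
    have hclose : ∀ s, |u s - (⌊u s * H⌋ : ℝ) / H| ≤ 1 / H := by
      intro s
      have h1 := Int.floor_le (u s * H)
      have h2 := Int.lt_floor_add_one (u s * H)
      have e : u s - (⌊u s * H⌋ : ℝ) / H = (u s * H - ⌊u s * H⌋) / H := by field_simp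
      rw [e, abs_of_nonneg (div_nonneg (by linarith) hH0.le)]
      apply div_le_div_of_nonneg_right _ hH0.le
      linarith
    refine ⟨fun s => (⌊u s * H⌋ : ℝ) / H, ?_, hclose⟩
    rw [Finset.mem_filter, Finset.mem_image]
    refine ⟨⟨fun s => ⌊u s * H⌋, ?_, rfl⟩, ?_⟩
    · rw [Fintype.mem_piFinset]
      intro s
      have := abs_le.1 (hu1 s)
      rw [Finset.mem_Icc]
      constructor
      · rw [Int.le_floor]
        push_cast
        nlinarith
      · have : (⌊u s * H⌋ : ℝ) ≤ ((H : ℤ) : ℝ) := by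
          refine (Int.floor_le _).trans ?_
          push_cast
          nlinarith
        exact_mod_cast this
    · have h3 : ∀ s, u s ^ 2 ≤ 2 * ((⌊u s * H⌋ : ℝ) / H) ^ 2 + 2 * (1 / H) ^ 2 := by
        intro s
        have h4 : (u s - (⌊u s * H⌋ : ℝ) / H) ^ 2 ≤ (1 / H : ℝ) ^ 2 := by
          rw [← sq_abs]
          exact pow_le_pow_left₀ (abs_nonneg _) (hclose s) 2
        nlinarith [sq_nonneg (u s - 2 * ((⌊u s * H⌋ : ℝ) / H))]
      have h5 := Finset.sum_le_sum fun s (_ : s ∈ Finset.univ) => h3 s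
      rw [hu, Finset.sum_add_distrib, ← Finset.mul_sum] at h5
      simp only [Finset.sum_const, Finset.card_univ, Fintype.card_fin, nsmul_eq_mul] at h5
      have h6 : (n : ℝ) * (2 * (1 / H) ^ 2) ≤ 1 / 2 := by
        have : (n : ℝ) * (2 * (1 / H) ^ 2) = 2 * n / H ^ 2 := by field_simp
        rw [this, div_le_iff₀ (by positivity)]
        nlinarith
      linarith

lemma exists_net_one (H : ℕ) :
    ∃ N : Finset (Fin 1 → ℝ), (∀ v ∈ N, 1 / 4 ≤ ∑ s, v s ^ 2) ∧ N.card ≤ 2 ∧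
      ∀ u : Fin 1 → ℝ, ∑ s, u s ^ 2 = 1 → ∃ v ∈ N, ∀ s, |u s - v s| ≤ 1 / H := by
  classical
  refine ⟨{fun _ => 1, fun _ => -1}, ?_, Finset.card_le_two, ?_⟩
  · intro v hv
    simp only [Finset.mem_insert, Finset.mem_singleton] at hv
    rcases hv with rfl | rfl <;> norm_num
  · intro u hu
    have h0 : ∀ s : Fin 1, s = 0 := fun s => Subsingleton.elim _ _
    simp only [Finset.univ_unique, Fin.default_eq_zero, Finset.sum_singleton] at hu
    rcases mul_self_eq_one_iff.1 ((sq (u 0)).symm.trans hu) with h | h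
    · refine ⟨fun _ => 1, by simp, fun s => ?_⟩
      rw [h0 s, h]; simp
    · refine ⟨fun _ => -1, by simp, fun s => ?_⟩
      rw [h0 s, h]; simp

/-! ### Deterministic part -/

lemma lower_on_sphere {n p : ℕ} (A : Fin p → Fin n → ℝ) (N : Finset (Fin n → ℝ)) (H : ℕ)
    (hH : 0 < H) (L : ℝ)
    (hcov : ∀ u : Fin n → ℝ, ∑ s, u s ^ 2 = 1 → ∃ v ∈ N, ∀ s, |u s - v s| ≤ 1 / H)
    (hN : ∀ v ∈ N, 2 * L < ∑ j, |∑ s, A j s * v s|)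
    (hLip : ∑ j, ∑ s, |A j s| ≤ L * H)
    (u : Fin n → ℝ) (hu : ∑ s, u s ^ 2 = 1) : L < ∑ j, |∑ s, A j s * u s| := by
  obtain ⟨v, hv, huv⟩ := hcov u hu
  have hH' : (0 : ℝ) < H := by exact_mod_cast hH
  have h1 : ∀ j, |∑ s, A j s * v s| ≤ |∑ s, A j s * u s| + (∑ s, |A j s|) * (1 / H) := by
    intro j
    have e : ∑ s, A j s * v s = ∑ s, A j s * u s - ∑ s, A j s * (u s - v s) := by
      rw [← Finset.sum_sub_distrib]
      apply Finset.sum_congr rfl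
      intro s _
      ring
    rw [e]
    refine (abs_sub _ _).trans ?_
    gcongr
    refine (Finset.abs_sum_le_sum_abs _ _).trans ?_
    rw [Finset.sum_mul]
    apply Finset.sum_le_sum
    intro s _
    rw [abs_mul]
    exact mul_le_mul_of_nonneg_left (huv s) (abs_nonneg _)
  have h2 := Finset.sum_le_sum fun j (_ : j ∈ Finset.univ) => h1 j
  rw [Finset.sum_add_distrib, ← Finset.sum_mul] at h2
  have h3 : (∑ j, ∑ s, |A j s|) * (1 / H) ≤ L := by
    rw [mul_one_div, div_le_iff₀ hH']
    exact hLip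
  have := hN v hv
  linarith

lemma recover {n p : ℕ} (A : Fin p → Fin n → ℝ) (L : ℝ) (R : Fin p → ℝ) (z : Fin p → ℝ)
    (hlow : ∀ u : Fin n → ℝ, ∑ s, u s ^ 2 = 1 → L < ∑ j, |∑ s, A j s * u s|)
    (hR : ∀ j, √(∑ s, A j s ^ 2) ≤ R j)
    (hz : ∑ j, {z : ℝ | z ≠ 0}.indicator (fun _ => R j) (z j) < L / 2)
    (vs vt : Fin n → ℝ)
    (hmin : ∀ v : Fin n → ℝ, ∑ j, |∑ s, A j s * vs s + z j - ∑ s, A j s * vt s| ≤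
      ∑ j, |∑ s, A j s * vs s + z j - ∑ s, A j s * v s|) (j : Fin p) :
    ∑ s, A j s * vt s = ∑ s, A j s * vs s := by
  set d : Fin n → ℝ := fun s => vt s - vs s with hd
  have hAd : ∀ j, ∑ s, A j s * d s = ∑ s, A j s * vt s - ∑ s, A j s * vs s := by
    intro j
    rw [← Finset.sum_sub_distrib]
    apply Finset.sum_congr rfl
    intro s _
    rw [hd]
    ring
  by_cases hd0 : ∑ s, d s ^ 2 = 0
  · have : ∀ s, d s = 0 := by
      intro s
      have := (Finset.sum_eq_zero_iff_of_nonneg (fun s _ => sq_nonneg (d s))).1 hd0 s (Finset.mem_univ s)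
      exact pow_eq_zero_iff (two_ne_zero) |>.1 this
    have h := hAd j
    simp only [this, mul_zero, Finset.sum_const_zero] at h
    linarith
  · exfalso
    have hpos : 0 < ∑ s, d s ^ 2 :=
      lt_of_le_of_ne (Finset.sum_nonneg fun s _ => sq_nonneg _) (Ne.symm hd0)
    set r : ℝ := √(∑ s, d s ^ 2) with hr
    have hr0 : 0 < r := Real.sqrt_pos.2 hpos
    have hrsq : r ^ 2 = ∑ s, d s ^ 2 := Real.sq_sqrt hpos.le
    have h1 : L * r < ∑ j, |∑ s, A j s * d s| := by
      have h := hlow (fun s => d s / r) (by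
        simp_rw [div_pow]
        rw [← Finset.sum_div, ← hrsq, div_self (by positivity)])
      have e : ∀ j, |∑ s, A j s * (d s / r)| = |∑ s, A j s * d s| / r := by
        intro j
        simp_rw [← mul_div_assoc]
        rw [← Finset.sum_div, abs_div, abs_of_pos hr0]
      simp_rw [e] at h
      rw [← Finset.sum_div, lt_div_iff₀ hr0] at h
      exact h
    have hcs : ∀ j, |∑ s, A j s * d s| ≤ R j * r := by
      intro j
      have : |∑ s, A j s * d s| ≤ √(∑ s, A j s ^ 2) * r := by
        rw [hr, ← Real.sqrt_mul (Finset.sum_nonneg fun s _ => sq_nonneg _)]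
        apply Real.abs_le_sqrt
        exact Finset.sum_mul_sq_le_sq_mul_sq _ _ _
      exact this.trans (by gcongr; exact hR j)
    have h2 := hmin vs
    have h3 : ∀ j, |z j| + |∑ s, A j s * d s|
        - 2 * ({z : ℝ | z ≠ 0}.indicator (fun _ => R j) (z j) * r)
        ≤ |∑ s, A j s * vs s + z j - ∑ s, A j s * vt s| := by
      intro j
      have e : ∑ s, A j s * vs s + z j - ∑ s, A j s * vt s = z j - ∑ s, A j s * d s := by
        rw [hAd j]; ring
      rw [e]
      by_cases hzj : z j = 0
      · rw [Set.indicator_of_notMem (by simpa using hzj), hzj]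
        simp
      · rw [Set.indicator_of_mem (by simpa using hzj)]
        have := hcs j
        have := abs_sub_abs_le_abs_sub (z j) (∑ s, A j s * d s)
        linarith
    have h4 := Finset.sum_le_sum fun j (_ : j ∈ Finset.univ) => h3 j
    rw [Finset.sum_sub_distrib, Finset.sum_add_distrib, ← Finset.mul_sum, ← Finset.sum_mul] at h4
    have h5 : ∀ j, |∑ s, A j s * vs s + z j - ∑ s, A j s * vs s| = |z j| := by
      intro j
      congr 1
      ring
    simp_rw [h5] at h2
    nlinarith

/-! ### Numerical constants -/

lemma exp_neg_le_inv (x : ℝ) (hx : 0 < x) : Real.exp (-x) ≤ 1 / x := by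
  rw [Real.exp_neg, ← one_div]
  apply one_div_le_one_div_of_le hx
  have := Real.add_one_le_exp x
  linarith

lemma numeric_one (δ c : ℝ) (hδ0 : 0 < δ) (hδ1 : δ < 1) (hc : c ^ 2 ≤ δ / 512) (p k : ℕ)
    (hp : 0 < p) (hk : 0 < k) (h : 1 ≤ c ^ 2 * p) :
    2 * ((3 * (δ / 48)) ^ k + Real.exp (-(p / 8 : ℝ))) ≤ δ / 4 := by
  have hP : (0 : ℝ) < p := by exact_mod_cast hp
  have h1 : (3 * (δ / 48)) ^ k ≤ δ / 16 := by
    have : (3 * (δ / 48)) ^ k ≤ (3 * (δ / 48)) ^ 1 :=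
      pow_le_pow_of_le_one (by positivity) (by linarith) hk
    linarith
  have h2 := exp_neg_le_inv (p / 8 : ℝ) (by positivity)
  have h3 : 1 / (p / 8 : ℝ) ≤ δ / 16 := by
    rw [div_le_iff₀ (by positivity)]
    have : c ^ 2 * p ≤ δ / 512 * p := by gcongr
    linarith
  linarith

lemma numeric_two (δ c : ℝ) (hδ0 : 0 < δ) (hδ1 : δ < 1) (K m n p k : ℕ) (hK : 1 ≤ K)
    (hc0 : 0 < c) (hc1 : c * (6 * K + 1) ≤ 1) (hc2 : c ≤ δ / 512)
    (hn : 2 ≤ n) (hm : 0 < m)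
    (hp : 0 < p) (hk : 0 < k) (h : (m * n : ℝ) ^ 2 ≤ c ^ 2 * p)
    (hkn : (n : ℝ) * Real.log (m * n) ≤ c * k) :
    ((2 * (K * n * m : ℕ) + 1 : ℕ) : ℝ) ^ n * ((3 * (δ / 48)) ^ k + Real.exp (-(p / 8 : ℝ))) ≤ δ / 4 := by
  have hP : (0 : ℝ) < p := by exact_mod_cast hp
  have hKr : (1 : ℝ) ≤ K := by exact_mod_cast hK
  have hk' : (0 : ℝ) < k := by exact_mod_cast hk
  have hM : (1 : ℝ) ≤ m := by exact_mod_cast hm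
  have hN : (2 : ℝ) ≤ n := by exact_mod_cast hn
  have hmn : (2 : ℝ) ≤ m * n := by nlinarith
  set D : ℝ := m * n with hD
  have hlog2 : 1 / 2 ≤ Real.log D := by
    have h1 : Real.log 2 ≤ Real.log D := Real.log_le_log (by norm_num) hmn
    have := Real.log_two_gt_d9
    linarith
  have hbase : ((2 * (K * n * m : ℕ) + 1 : ℕ) : ℝ) ≤ 3 * K * D := by
    push_cast
    have : (1 : ℝ) ≤ K * D := by nlinarith
    rw [hD] at this ⊢
    nlinarith
  have hpos : 0 < 3 * K * D := by positivity
  have hcard : ((2 * (K * n * m : ℕ) + 1 : ℕ) : ℝ) ^ n ≤ Real.exp (n * Real.log (3 * K * D)) := by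
    calc _ ≤ (3 * K * D) ^ n := by gcongr
      _ = _ := by rw [Real.exp_nat_mul, Real.exp_log hpos]
  have hnD : (n : ℝ) ≤ D := by nlinarith
  -- bound by `k`
  have hk1 : (n : ℝ) * Real.log (3 * K * D) ≤ k := by
    rw [Real.log_mul (by positivity) (by positivity)]
    have h3K : Real.log (3 * K) ≤ 3 * K := by
      have := Real.log_le_sub_one_of_pos (x := 3 * K) (by positivity); linarith
    have : Real.log (3 * K) + Real.log D ≤ (6 * K + 1) * Real.log D := by nlinarith
    calc _ ≤ n * ((6 * K + 1) * Real.log D) := by gcongr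
      _ = (6 * K + 1) * (n * Real.log D) := by ring
      _ ≤ (6 * K + 1) * (c * k) := by gcongr
      _ = (c * (6 * K + 1)) * k := by ring
      _ ≤ 1 * k := by gcongr
      _ = k := one_mul _
  have hp1 : (n : ℝ) * Real.log (3 * K * D) ≤ p / 16 := by
    have h1 : Real.log (3 * K * D) ≤ 3 * K * D := by
      have := Real.log_le_sub_one_of_pos (x := 3 * K * D) (by positivity); linarith
    have hc512 : c ≤ 1 / 512 := by linarith
    have hKc : 3 * K * c ≤ 1 := by nlinarith
    calc _ ≤ D * (3 * K * D) := by
          apply mul_le_mul hnD h1 _ (by positivity)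
          apply Real.log_nonneg
          nlinarith
      _ = 3 * K * D ^ 2 := by ring
      _ ≤ 3 * K * (c ^ 2 * p) := by gcongr
      _ = (3 * K * c) * c * p := by ring
      _ ≤ 1 * (1 / 512) * p := by gcongr
      _ ≤ p / 16 := by linarith
  have hA : ((2 * (K * n * m : ℕ) + 1 : ℕ) : ℝ) ^ n * (3 * (δ / 48)) ^ k ≤ δ / 8 := by
    have h1 : (3 * (δ / 48)) ^ k ≤ Real.exp (-(2 * k : ℝ)) := by
      have : 3 * (δ / 48) ≤ Real.exp (-2) := by
        have e2 : Real.exp 2 = Real.exp 1 * Real.exp 1 := by rw [← Real.exp_add]; norm_num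
        have e1 := Real.exp_one_lt_d9
        have e0 := Real.exp_pos 1
        have : Real.exp 2 ≤ 16 := by nlinarith
        rw [Real.exp_neg]
        have := inv_anti₀ (Real.exp_pos 2) this
        linarith
      calc _ ≤ (Real.exp (-2)) ^ k := by gcongr
        _ = _ := by rw [← Real.exp_nat_mul]; congr 1; ring
    calc _ ≤ Real.exp k * Real.exp (-(2 * k : ℝ)) := by
          apply mul_le_mul (hcard.trans (Real.exp_le_exp.2 hk1)) h1 (by positivity) (by positivity)
      _ = Real.exp (-(k : ℝ)) := by rw [← Real.exp_add]; congr 1; ring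
      _ ≤ 1 / k := exp_neg_le_inv _ hk'
      _ ≤ δ / 8 := by
          rw [div_le_iff₀ hk']
          have : 2 * (1 / 2) ≤ (n : ℝ) * Real.log D :=
            mul_le_mul hN hlog2 (by norm_num) (by linarith)
          have : 1 ≤ c * k := by linarith
          have : c * k ≤ δ / 512 * k := by gcongr
          have : 0 ≤ δ * k := by positivity
          linarith
  have hB : ((2 * (K * n * m : ℕ) + 1 : ℕ) : ℝ) ^ n * Real.exp (-(p / 8 : ℝ)) ≤ δ / 8 := by
    calc _ ≤ Real.exp (p / 16) * Real.exp (-(p / 8 : ℝ)) := by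
          apply mul_le_mul_of_nonneg_right (hcard.trans (Real.exp_le_exp.2 hp1)) (by positivity)
      _ = Real.exp (-(p / 16 : ℝ)) := by rw [← Real.exp_add]; congr 1; ring
      _ ≤ 1 / (p / 16) := exp_neg_le_inv _ (by positivity)
      _ ≤ δ / 8 := by
          rw [div_le_iff₀ (by positivity)]
          have h0 : 1 ≤ D ^ 2 := one_le_pow₀ (by linarith)
          have h1 : 1 ≤ c ^ 2 * p := h0.trans h
          have h2 : c ^ 2 ≤ c := pow_le_of_le_one hc0.le (by linarith) two_ne_zero
          have : c ^ 2 * p ≤ (δ / 512) * p := by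
            gcongr
            linarith
          linarith
  rw [mul_add]
  linarith

lemma sqrt_Trow_le (m n p k : ℕ) (hm : 0 < m) (hn : 0 < n)
    (q : (Fin n → Fin (m * k) → ℝ) × (Fin p → Fin k → ℝ)) (j : Fin p) :
    √(∑ s, Abeta m n p k q.1 q.2 j s ^ 2) ≤ Rrow m n p k q j := by
  have hM : (0 : ℝ) < m := by exact_mod_cast hm
  have hN : (0 : ℝ) < √(n : ℝ) := Real.sqrt_pos.2 (by exact_mod_cast hn)
  have hT := Trow_nonneg m n p k q j
  change √(Trow m n p k q j) ≤ _
  unfold Rrow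
  set a : ℝ := m * √n with ha
  have ha0 : 0 < a := by positivity
  set T := Trow m n p k q j
  have hs : √T ^ 2 = T := Real.sq_sqrt hT
  have : a / 2 + (2 * a)⁻¹ * T = (a ^ 2 + T) / (2 * a) := by field_simp
  rw [this, le_div_iff₀ (by positivity)]
  nlinarith [sq_nonneg (√T - a), hs]

lemma lip_bound (m n p k : ℕ) (hm : 0 < m) (hn : 0 < n) (δ t : ℝ) (K : ℕ)
    (hδ0 : 0 < δ) (hδ1 : δ < 1) (ht : 0 < t) (hK : 1024 / (δ * t) ≤ K)
    (q : (Fin n → Fin (m * k) → ℝ) × (Fin p → Fin k → ℝ))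
    (hq : ∑ j, Trow m n p k q j < p * (n * (m : ℝ) ^ 2) / (δ / 4)) :
    ∑ j, ∑ s, |Abeta m n p k q.1 q.2 j s| ≤ (p * (t * √m / 256)) * ((K * n * m : ℕ) : ℝ) := by
  have hM : (1 : ℝ) ≤ m := by exact_mod_cast hm
  have hN : (0 : ℝ) < n := by exact_mod_cast hn
  have hM0 : (0 : ℝ) < m := by linarith
  have hsm : 1 ≤ √(m : ℝ) := by rw [Real.one_le_sqrt]; exact hM
  have h1 : ∀ j s, |Abeta m n p k q.1 q.2 j s| ≤
      m / 2 + (2 * (m : ℝ))⁻¹ * Abeta m n p k q.1 q.2 j s ^ 2 := by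
    intro j s
    set a := Abeta m n p k q.1 q.2 j s
    have : (m : ℝ) / 2 + (2 * (m : ℝ))⁻¹ * a ^ 2 = ((m : ℝ) ^ 2 + a ^ 2) / (2 * m) := by field_simp
    rw [this, le_div_iff₀ (by positivity), ← sq_abs a]
    nlinarith [sq_nonneg (|a| - m)]
  have h2 : ∑ j, ∑ s, |Abeta m n p k q.1 q.2 j s| ≤
      p * (n * (m / 2)) + (2 * (m : ℝ))⁻¹ * ∑ j, Trow m n p k q j := by
    refine (Finset.sum_le_sum fun j _ => Finset.sum_le_sum fun s _ => h1 j s).trans ?_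
    simp_rw [Finset.sum_add_distrib, ← Finset.mul_sum]
    simp only [Finset.sum_const, Finset.card_univ, Fintype.card_fin, nsmul_eq_mul]
    rfl
  have h3 : (2 * (m : ℝ))⁻¹ * ∑ j, Trow m n p k q j ≤ 2 * (p * (n * m)) / δ := by
    calc _ ≤ (2 * (m : ℝ))⁻¹ * (p * (n * (m : ℝ) ^ 2) / (δ / 4)) := by gcongr
      _ = _ := by field_simp; ring
  have hX : (0 : ℝ) ≤ p * (n * m) := by positivity
  have h4 : (p : ℝ) * (n * (m / 2)) ≤ 2 * (p * (n * m)) / δ := by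
    rw [le_div_iff₀ hδ0]
    nlinarith
  have hKt : 4 / δ ≤ t / 256 * K := by
    have := mul_le_mul_of_nonneg_left hK (show 0 ≤ t / 256 by positivity)
    refine le_trans (le_of_eq ?_) this
    field_simp
    norm_num
  calc _ ≤ (4 / δ) * (p * (n * m)) := by
        refine h2.trans ((add_le_add h4 h3).trans (le_of_eq ?_)); ring
    _ ≤ (t / 256 * K) * (p * (n * m)) := by gcongr
    _ = (t / 256 * K) * (p * (n * m)) * 1 := by ring
    _ ≤ (t / 256 * K) * (p * (n * m)) * √m := by gcongr
    _ = _ := by push_cast; ring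

/-!
STATEMENT 7 (exact recovery of the output layer): `x_s` i.i.d. `N(0, I_d)`,
`W_j` i.i.d. `N(0, k⁻¹ I_k)`; `β* = A_β v*` in the column space of `A_β` (with
`v*` a measurable function of data and weights); `η = β* + z` with mixture
contamination noise independent of data and weights.  For each `δ ∈ (0,1)` there
is `c(δ) > 0` such that if `ε√(mn) ≤ c(δ)`, `mn/√p ≤ c(δ)` and
`n log(mn)/k ≤ c(δ)`, then with probability at least `1 − δ` every minimizer `ṽ`
of `v ↦ ‖η − A_β v‖₁` satisfies `A_β ṽ = β*`.
-/

theorem statement_7 (δ : ℝ) (hδ : δ ∈ Set.Ioo (0 : ℝ) 1) :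
    ∃ c : ℝ, 0 < c ∧
      ∀ (ε : ℝ), 0 ≤ ε → ε < 1 →
      ∀ (m n p k : ℕ), 0 < m → 0 < n → 0 < p → 0 < k →
      ∀ (Q : Fin p → Measure ℝ), (∀ j, IsProbabilityMeasure (Q j)) →
      ∀ (vstar : (Fin n → Fin (m * k) → ℝ) × (Fin p → Fin k → ℝ) → (Fin n → ℝ)),
        Measurable vstar →
        ε * Real.sqrt (m * n : ℝ) ≤ c →
        (m * n : ℝ) / Real.sqrt p ≤ c →
        (n : ℝ) * Real.log (m * n : ℝ) / k ≤ c →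
        ENNReal.ofReal (1 - δ) ≤
          (((Measure.pi fun _ : Fin n => stdGaussianVec (m * k)).prod
              (Measure.pi fun _ : Fin p => hiddenWeightLaw k)).prod
            (Measure.pi fun j : Fin p => mixture ε (Q j)))
            {ω : ((Fin n → Fin (m * k) → ℝ) × (Fin p → Fin k → ℝ)) × (Fin p → ℝ) |
              ∀ vtilde : Fin n → ℝ,
                (∀ v : Fin n → ℝ,
                  (∑ j : Fin p,
                    |AbetaApp m n p k ω.1.1 ω.1.2 (vstar ω.1) j + ω.2 j
                      - AbetaApp m n p k ω.1.1 ω.1.2 vtilde j|) ≤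
                  ∑ j : Fin p,
                    |AbetaApp m n p k ω.1.1 ω.1.2 (vstar ω.1) j + ω.2 j
                      - AbetaApp m n p k ω.1.1 ω.1.2 v j|) →
                ∀ j : Fin p, AbetaApp m n p k ω.1.1 ω.1.2 vtilde j
                  = AbetaApp m n p k ω.1.1 ω.1.2 (vstar ω.1) j} := by
  obtain ⟨hδ0, hδ1⟩ := hδ
  set t : ℝ := δ / 48 with ht
  have ht0 : 0 < t := by positivity
  have ht1 : t < 1 := by rw [ht]; linarith
  set K : ℕ := ⌈1024 / (δ * t)⌉₊ + 2 with hKdef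
  have hK : 1024 / (δ * t) ≤ (K : ℝ) := by
    have := Nat.le_ceil (1024 / (δ * t))
    rw [hKdef]
    push_cast
    linarith
  have hK2 : 2 ≤ K := by omega
  have hK2r : (2 : ℝ) ≤ K := by exact_mod_cast hK2
  set c : ℝ := δ * t / (4096 * K) with hc
  have hc0 : 0 < c := by positivity
  have hcK : c * (4096 * K) = δ * t := by rw [hc]; field_simp
  have hδt : δ * t < δ := by nlinarith
  have hc1 : c * (6 * K + 1) ≤ 1 := by nlinarith
  have hc3 : c ≤ δ * t / 4096 := by nlinarith
  have hc2 : c ≤ δ / 512 := by linarith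
  have hcsq : c ^ 2 ≤ δ / 512 := (pow_le_of_le_one hc0.le (by linarith) two_ne_zero).trans hc2
  refine ⟨c, hc0, ?_⟩
  intro ε hε0 hε1 m n p k hm hn hp hk Q hQ vstar _ h1 h2 h3
  have hM : (0 : ℝ) < m := by exact_mod_cast hm
  have hN : (0 : ℝ) < n := by exact_mod_cast hn
  have hP : (0 : ℝ) < p := by exact_mod_cast hp
  have hk' : (0 : ℝ) < k := by exact_mod_cast hk
  have hsm : 0 < √(m : ℝ) := Real.sqrt_pos.2 hM
  have hpr := fun j => mixture_prob ε hε0 hε1 (Q j)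
  have h2' : (m * n : ℝ) ^ 2 ≤ c ^ 2 * p := by
    have hsp : 0 < √(p : ℝ) := Real.sqrt_pos.2 hP
    rw [div_le_iff₀ hsp] at h2
    calc (m * n : ℝ) ^ 2 ≤ (c * √p) ^ 2 := by gcongr
      _ = c ^ 2 * p := by rw [mul_pow, Real.sq_sqrt hP.le]
  have h3' : (n : ℝ) * Real.log (m * n) ≤ c * k := by
    rwa [div_le_iff₀ hk'] at h3
  -- the net
  have hnet : ∃ N : Finset (Fin n → ℝ), (∀ v ∈ N, 1 / 4 ≤ ∑ s, v s ^ 2) ∧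
      (N.card : ℝ) * ((3 * t) ^ k + Real.exp (-(p / 8 : ℝ))) ≤ δ / 4 ∧
      ∀ u : Fin n → ℝ, ∑ s, u s ^ 2 = 1 →
        ∃ v ∈ N, ∀ s, |u s - v s| ≤ 1 / ((K * n * m : ℕ) : ℝ) := by
    rcases (show n = 1 ∨ 2 ≤ n by omega) with h | h
    · subst h
      obtain ⟨N, hN1, hN2, hN3⟩ := exists_net_one (K * 1 * m)
      refine ⟨N, hN1, ?_, hN3⟩
      have hD : 1 ≤ c ^ 2 * p := by
        refine le_trans ?_ h2'
        have : (1 : ℝ) ≤ m := by exact_mod_cast hm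
        apply one_le_pow₀
        simpa using this
      refine le_trans ?_ (numeric_one δ c hδ0 hδ1 hcsq p k hp hk hD)
      have : (N.card : ℝ) ≤ 2 := by exact_mod_cast hN2
      gcongr
    · obtain ⟨N, hN1, hN2, hN3⟩ := exists_net n (K * n * m) hn (by
        calc 2 * n ≤ K * n := Nat.mul_le_mul_right n hK2
          _ ≤ K * n * m := Nat.le_mul_of_pos_right _ hm)
      refine ⟨N, hN1, ?_, hN3⟩
      refine le_trans ?_ (numeric_two δ c hδ0 hδ1 K m n p k (by omega) hc0 hc1 hc2 h hm hp hk
        h2' h3')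
      have : (N.card : ℝ) ≤ ((2 * (K * n * m : ℕ) + 1 : ℕ) : ℝ) ^ n := by exact_mod_cast hN2
      gcongr
  obtain ⟨N, hN1, hN2, hN3⟩ := hnet
  set μ := (Measure.pi fun _ : Fin n => stdGaussianVec (m * k)).prod
              (Measure.pi fun _ : Fin p => hiddenWeightLaw k) with hμ
  set ν := Measure.pi fun j : Fin p => mixture ε (Q j) with hν
  set G : Set (((Fin n → Fin (m * k) → ℝ) × (Fin p → Fin k → ℝ)) × (Fin p → ℝ)) := _
  change ENNReal.ofReal (1 - δ) ≤ (μ.prod ν) G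
  set B1 : Set ((Fin n → Fin (m * k) → ℝ) × (Fin p → Fin k → ℝ)) :=
    {q | p * (n * (m : ℝ) ^ 2) / (δ / 4) ≤ ∑ j, Trow m n p k q j} with hB1
  set Bv : (Fin n → ℝ) → Set ((Fin n → Fin (m * k) → ℝ) × (Fin p → Fin k → ℝ)) := fun v =>
    {q | ∑ j, |AbetaApp m n p k q.1 q.2 v j| ≤ p * (t * √m / 128)} with hBv
  set B2 : Set (((Fin n → Fin (m * k) → ℝ) × (Fin p → Fin k → ℝ)) × (Fin p → ℝ)) :=
    {ω | p * (t * √m / 512) ≤ ∑ j, {z : ℝ | z ≠ 0}.indicator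
      (fun _ => Rrow m n p k ω.1 j) (ω.2 j)} with hB2
  have hfst : ∀ S : Set ((Fin n → Fin (m * k) → ℝ) × (Fin p → Fin k → ℝ)),
      (μ.prod ν) (Prod.fst ⁻¹' S) = μ S := by
    intro S
    rw [← Set.prod_univ, Measure.prod_prod, measure_univ, mul_one]
  have hcover : Gᶜ ⊆ (Prod.fst ⁻¹' B1 ∪ B2) ∪ ⋃ v ∈ N, Prod.fst ⁻¹' (Bv v) := by
    intro ω hω
    by_contra hcon
    simp only [Set.mem_union, Set.mem_iUnion, not_or, not_exists, Set.mem_preimage] at hcon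
    obtain ⟨⟨hb1, hb2⟩, hbv⟩ := hcon
    apply hω
    have hb1' : ∑ j, Trow m n p k ω.1 j < p * (n * (m : ℝ) ^ 2) / (δ / 4) :=
      not_le.1 (fun h => hb1 h)
    have hb2' : ∑ j, {z : ℝ | z ≠ 0}.indicator (fun _ => Rrow m n p k ω.1 j) (ω.2 j)
        < p * (t * √m / 512) := not_le.1 (fun h => hb2 h)
    intro vt hmin j
    have hlow := lower_on_sphere (fun j s => Abeta m n p k ω.1.1 ω.1.2 j s) N (K * n * m)
      (by positivity) (p * (t * √m / 256)) hN3
      (by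
        intro v hv
        have h : p * (t * √m / 128) < ∑ j, |AbetaApp m n p k ω.1.1 ω.1.2 v j| :=
          not_le.1 (fun h => hbv v hv h)
        refine lt_of_eq_of_lt ?_ h
        ring)
      (lip_bound m n p k hm hn δ t K hδ0 hδ1 ht0 hK ω.1 hb1')
    exact recover (fun j s => Abeta m n p k ω.1.1 ω.1.2 j s) (p * (t * √m / 256))
      (Rrow m n p k ω.1) ω.2 hlow (sqrt_Trow_le m n p k hm hn ω.1)
      (lt_of_lt_of_eq hb2' (by ring)) (vstar ω.1) vt hmin j
  have hm1 : (μ.prod ν) (Prod.fst ⁻¹' B1) ≤ ENNReal.ofReal (δ / 4) := by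
    rw [hfst]
    exact B1_bound m n p k hm hn hp hk (δ / 4) (by positivity)
  have hm2 : (μ.prod ν) B2 ≤ ENNReal.ofReal (δ / 4) := by
    refine (B2_bound m n p k hm hn hp hk ε hε0 hε1 Q hQ (t * √m / 512) (by positivity)).trans ?_
    apply ENNReal.ofReal_le_ofReal
    rw [div_le_iff₀ (by positivity)]
    rw [Real.sqrt_mul hM.le] at h1
    have hms : (m : ℝ) = √m * √m := (Real.mul_self_sqrt hM.le).symm
    calc ε * (m * √n) = (ε * (√m * √n)) * √m := by
          conv_lhs => rw [hms]
          ring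
      _ ≤ (δ * t / 4096) * √m := by
          gcongr
          exact h1.trans hc3
      _ ≤ δ / 4 * (t * √m / 512) := by
          have : 0 ≤ δ * t * √m := by positivity
          linarith
  have hm3 : (μ.prod ν) (⋃ v ∈ N, Prod.fst ⁻¹' (Bv v)) ≤ ENNReal.ofReal (δ / 4) := by
    refine (measure_biUnion_finset_le N _).trans ?_
    have : ∀ v ∈ N, (μ.prod ν) (Prod.fst ⁻¹' (Bv v))
        ≤ ENNReal.ofReal ((3 * t) ^ k + Real.exp (-(p / 8 : ℝ))) := by
      intro v hv
      rw [hfst]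
      exact point_bound m n p k hm hk v (hN1 v hv) t ht0
    refine (Finset.sum_le_sum this).trans ?_
    rw [Finset.sum_const, nsmul_eq_mul, ← ENNReal.ofReal_natCast,
      ← ENNReal.ofReal_mul (by positivity)]
    exact ENNReal.ofReal_le_ofReal hN2
  have hGc : (μ.prod ν) Gᶜ ≤ ENNReal.ofReal δ := by
    refine (measure_mono hcover).trans ((measure_union_le _ _).trans ?_)
    refine (add_le_add ((measure_union_le _ _).trans (add_le_add hm1 hm2)) hm3).trans ?_
    rw [← ENNReal.ofReal_add (by positivity) (by positivity),
      ← ENNReal.ofReal_add (by positivity) (by positivity)]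
    apply ENNReal.ofReal_le_ofReal
    linarith
  have htot : (1 : ENNReal) ≤ (μ.prod ν) G + ENNReal.ofReal δ := by
    calc (1 : ENNReal) = (μ.prod ν) Set.univ := measure_univ.symm
      _ = (μ.prod ν) (G ∪ Gᶜ) := by rw [Set.union_compl_self]
      _ ≤ (μ.prod ν) G + (μ.prod ν) Gᶜ := measure_union_le _ _
      _ ≤ _ := by gcongr
  rw [ENNReal.ofReal_sub _ hδ0.le, ENNReal.ofReal_one]
  exact tsub_le_iff_right.2 htot

end
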